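/- Let f : ℂ → ℂ be a polynomial function and let H denote the Hilbert transform, defined by Hg = 𝓕⁻¹[x ↦ -i sgn(x) · 𝓕g(x)]. Then for every z ∈ ℂ, B(H(B⁻¹f))(z) = (2/√π) ∫_ℂ f(w) e^{z w̄} A((z - w̄)/√2) dλ(w). -/

import Mathlib

/-!
Write `k(x, z) = e^{2xz - x² - z²/2}` for the Bargmann kernel. For fixed `z` it is a Gaussian in
`x`, and the Fourier transform in `x` turns `k(·, z)` into `k(·, -iz)`. Hence `B` conjugates `𝓕` to
the rotation `F ↦ F(-i ·)`, and a bounded Fourier multiplier `m` becomes the integral operator on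
the Gaussian plane with kernel `√(2/π) ∫ m(t) k(t, iz) k(t, -i w̄) dt`. For `m = -i sgn` this kernel
is computed from the identity `∫ sgn(t) e^{(ζ + it)²} dt = 2i A(ζ)`: fold the integral onto
`(0, ∞)`, where the integrand has the primitive `-i (A(ζ + it) + A(ζ - it))`, which vanishes at
infinity. Fubini's theorem only needs `f(w) e^{-|w|²/2}` to be integrable, as it is for polynomials.
-/

open MeasureTheory Complex

/-- Integration against the Gaussian measure dλ(z) = π⁻¹ e^{-|z|²} dA(z) on ℂ. -/
noncomputable def gaussInt (F : ℂ → ℂ) : ℂ :=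
  (Real.pi : ℂ)⁻¹ * ∫ w : ℂ, F w * Complex.exp (-(‖w‖ : ℂ)^2)

/-- The Bargmann transform Bf(z) = (2/π)^{1/4} ∫ f(x) e^{2xz - x² - z²/2} dx. -/
noncomputable def Bargmann (f : ℝ → ℂ) (z : ℂ) : ℂ :=
  (((2 / Real.pi) ^ ((1:ℝ)/4) : ℝ) : ℂ) *
    ∫ x : ℝ, f x * Complex.exp (2*x*z - (x:ℂ)^2 - z^2/2)

/-- The inverse Bargmann transform B⁻¹F(x) = (2/π)^{1/4} ∫_ℂ F(z) e^{2xz̄ - x² - z̄²/2} dλ(z). -/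
noncomputable def BargmannInv (F : ℂ → ℂ) (x : ℝ) : ℂ :=
  (((2 / Real.pi) ^ ((1:ℝ)/4) : ℝ) : ℂ) *
    gaussInt (fun z => F z * Complex.exp (2*x*(starRingEnd ℂ z) - (x:ℂ)^2 - (starRingEnd ℂ z)^2/2))

/-- The Fourier transform 𝓕f(x) = π^{-1/2} ∫ e^{-2ixt} f(t) dt. -/
noncomputable def FourierT (f : ℝ → ℂ) (x : ℝ) : ℂ :=
  (((Real.sqrt Real.pi)⁻¹ : ℝ) : ℂ) * ∫ t : ℝ, Complex.exp (-2 * Complex.I * x * t) * f t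

/-- The inverse Fourier transform 𝓕⁻¹f(x) = π^{-1/2} ∫ e^{2ixt} f(t) dt. -/
noncomputable def FourierInv (f : ℝ → ℂ) (x : ℝ) : ℂ :=
  (((Real.sqrt Real.pi)⁻¹ : ℝ) : ℂ) * ∫ t : ℝ, Complex.exp (2 * Complex.I * x * t) * f t

/-- The Hilbert transform Hg = 𝓕⁻¹[x ↦ -i sgn(x) 𝓕g(x)]. -/
noncomputable def hilbertT (g : ℝ → ℂ) : ℝ → ℂ :=
  FourierInv (fun x => -Complex.I * ((Real.sign x : ℝ) : ℂ) * FourierT g x)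

/-- A(z) = ∫₀^z e^{u²} du, the antiderivative of e^{z²} vanishing at 0, the integral being
taken along the segment from 0 to z (equivalently, any path from 0 to z). -/
noncomputable def Afun (z : ℂ) : ℂ :=
  ∫ t in (0:ℝ)..1, z * Complex.exp (((t:ℂ) * z)^2)

open Filter Set Topology
open scoped ComplexConjugate

lemma hasDerivAt_Afun (z : ℂ) : HasDerivAt Afun (cexp (z ^ 2)) z := by
  have hdiff : Differentiable ℂ fun u : ℂ => cexp (u ^ 2) := by fun_prop
  obtain ⟨F, hF⟩ := hdiff.isExactOn_univ
  have hF' : ∀ u, HasDerivAt F (cexp (u ^ 2)) u := fun u => hF u trivial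
  have hA : Afun = fun u => F u - F 0 := by
    funext u
    have hray : ∀ t : ℝ, HasDerivAt (fun t : ℝ => F (t * u)) (u * cexp ((t * u) ^ 2)) t :=
      fun t => by
        simpa [mul_comm] using
          ((hF' (t * u)).comp (t : ℂ) ((hasDerivAt_id (t : ℂ)).mul_const u)).comp_ofReal
    have := intervalIntegral.integral_eq_sub_of_hasDerivAt (a := 0) (b := 1)
      (fun t _ => hray t) (Continuous.intervalIntegrable (by fun_prop) _ _)
    simpa [Afun] using this
  simpa only [hA] using (hF' z).sub_const (F 0)

lemma Afun_neg (z : ℂ) : Afun (-z) = -Afun z := by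
  simp only [Afun, mul_neg, neg_sq, neg_mul, intervalIntegral.integral_neg]

lemma norm_cexp_sq_I_mul_add_le {t R : ℝ} (ht : 0 ≤ t) {v : ℂ} (hv : ‖v‖ ≤ R) :
    ‖cexp ((I * t + v) ^ 2)‖ ≤ Real.exp (2 * R ^ 2 - (t - R) ^ 2) := by
  have hre : ((I * t + v) ^ 2).re = v.re ^ 2 - (t + v.im) ^ 2 := by simp [pow_two]
  have hsq : v.re ^ 2 + v.im ^ 2 ≤ R ^ 2 := by
    rw [← normSq_add_mul_I, re_add_im, normSq_eq_norm_sq]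
    gcongr
  have him : -R ≤ v.im := (neg_le_neg hv).trans (abs_le.1 (abs_im_le_norm v)).1
  rw [norm_exp, hre, Real.exp_le_exp]
  nlinarith [sq_nonneg v.im]

lemma tendsto_Afun_add_Afun_vertical (z : ℂ) :
    Tendsto (fun t : ℝ => Afun (z + I * t) + Afun (z - I * t)) atTop (𝓝 0) := by
  have hbound : ∀ᶠ t : ℝ in atTop, ‖Afun (z + I * t) + Afun (z - I * t)‖ ≤
      Real.exp (2 * ‖z‖ ^ 2 - (t - ‖z‖) ^ 2) * ‖2 * z‖ := by
    filter_upwards [eventually_ge_atTop 0] with t ht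
    have hseg := (convex_closedBall (I * t) ‖z‖).norm_image_sub_le_of_norm_hasDerivWithin_le
      (fun u _ => (hasDerivAt_Afun u).hasDerivWithinAt)
      (fun u hu => by
        simpa using norm_cexp_sq_I_mul_add_le ht (mem_closedBall_iff_norm.1 hu))
      (show I * t - z ∈ _ by simp) (show I * t + z ∈ _ by simp)
    rw [← neg_sub (I * (t : ℂ)) z, Afun_neg, ← sub_eq_add_neg, add_comm z]
    convert hseg using 2
    congr 1; ring
  refine squeeze_zero_norm' hbound ?_
  have hsq : Tendsto (fun t : ℝ => (t - ‖z‖) ^ 2) atTop atTop :=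
    (tendsto_pow_atTop two_ne_zero).comp (tendsto_atTop_add_const_right _ _ tendsto_id)
  simpa [sub_eq_add_neg] using (Real.tendsto_exp_atBot.comp
    (tendsto_atBot_add_const_left _ (2 * ‖z‖ ^ 2) (tendsto_neg_atTop_atBot.comp hsq))).mul_const
      ‖2 * z‖

lemma integral_sign_mul {g : ℝ → ℂ} (hg : Integrable g) :
    ∫ t : ℝ, (Real.sign t : ℂ) * g t = ∫ t in Ioi (0 : ℝ), (g t - g (-t)) := by
  have hpos : EqOn (fun t : ℝ => (Real.sign t : ℂ) * g t) g (Ioi 0) := fun t ht => by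
    simp [Real.sign_of_pos ht]
  have hneg : EqOn (fun t : ℝ => (Real.sign t : ℂ) * g t) (fun t => -g t) (Iio 0) := fun t ht => by
    simp [Real.sign_of_neg ht]
  have hint_neg : IntegrableOn (fun t : ℝ => (Real.sign t : ℂ) * g t) (Iic 0) :=
    (hg.neg.integrableOn.congr_fun hneg.symm measurableSet_Iio).congr_set_ae Iio_ae_eq_Iic.symm
  have hrefl : ∫ t in Iic (0 : ℝ), g t = ∫ t in Ioi (0 : ℝ), g (-t) := by
    simp
  rw [← intervalIntegral.integral_Iic_add_Ioi hint_neg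
      (hg.integrableOn.congr_fun hpos.symm measurableSet_Ioi),
    setIntegral_congr_fun measurableSet_Ioi hpos, integral_Iic_eq_integral_Iio,
    setIntegral_congr_fun measurableSet_Iio hneg, integral_neg, ← integral_Iic_eq_integral_Iio,
    hrefl, integral_sub hg.integrableOn hg.comp_neg.integrableOn, neg_add_eq_sub]

lemma integrable_cexp_sq_add_I_mul (z : ℂ) : Integrable fun t : ℝ => cexp ((z + I * t) ^ 2) := by
  refine (integrable_cexp_quadratic' (b := -1) (by simp) (2 * I * z) (z ^ 2)).congr
    (.of_forall fun t => congrArg cexp ?_)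
  linear_combination -(t : ℂ) ^ 2 * I_sq

lemma integral_sign_mul_cexp_sq (z : ℂ) :
    ∫ t : ℝ, (Real.sign t : ℂ) * cexp ((z + I * t) ^ 2) = 2 * I * Afun z := by
  have hgauss := integrable_cexp_sq_add_I_mul z
  have hup : ∀ t : ℝ, HasDerivAt (fun t : ℝ => Afun (z + I * t)) (cexp ((z + I * t) ^ 2) * I) t :=
    fun t => by
      simpa using ((hasDerivAt_Afun _).comp (t : ℂ)
        (((hasDerivAt_id (t : ℂ)).const_mul I).const_add z)).comp_ofReal
  have hdown : ∀ t : ℝ, HasDerivAt (fun t : ℝ => Afun (z - I * t))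
      (cexp ((z - I * t) ^ 2) * -I) t := fun t => by
    simpa using ((hasDerivAt_Afun _).comp (t : ℂ)
      (((hasDerivAt_id (t : ℂ)).const_mul I).const_sub z)).comp_ofReal
  have hderiv : ∀ t : ℝ, HasDerivAt (fun t : ℝ => -I * (Afun (z + I * t) + Afun (z - I * t)))
      (cexp ((z + I * t) ^ 2) - cexp ((z + I * ↑(-t)) ^ 2)) t := fun t => by
    refine (((hup t).add (hdown t)).const_mul (-I)).congr_deriv ?_
    have hneg : z + I * ↑(-t) = z - I * t := by rw [ofReal_neg, mul_neg, sub_eq_add_neg]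
    rw [hneg]
    linear_combination (-cexp ((z + I * t) ^ 2) + cexp ((z - I * t) ^ 2)) * I_sq
  rw [integral_sign_mul hgauss, integral_Ioi_of_hasDerivAt_of_tendsto' (fun t _ => hderiv t)
    (hgauss.sub hgauss.comp_neg).integrableOn ((tendsto_Afun_add_Afun_vertical z).const_mul (-I))]
  simp only [ofReal_zero, mul_zero, add_zero, sub_zero]
  ring

lemma integral_sign_mul_cexp_sq_of_pos {r : ℝ} (hr : 0 < r) (z : ℂ) :
    ∫ t : ℝ, (Real.sign t : ℂ) * cexp ((z + I * (r * t : ℝ)) ^ 2) = 2 * I * Afun z / r := by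
  have hsign : ∀ t : ℝ, Real.sign (r * t) = Real.sign t := fun t => by
    rcases lt_trichotomy t 0 with ht | rfl | ht
    · rw [Real.sign_of_neg ht, Real.sign_of_neg (mul_neg_of_pos_of_neg hr ht)]
    · rw [mul_zero]
    · rw [Real.sign_of_pos ht, Real.sign_of_pos (mul_pos hr ht)]
  have hscale := Measure.integral_comp_mul_left
    (fun t : ℝ => (Real.sign t : ℂ) * cexp ((z + I * t) ^ 2)) r
  simp only [hsign, integral_sign_mul_cexp_sq] at hscale
  rw [hscale, abs_of_pos (inv_pos.2 hr), real_smul, ofReal_inv, inv_mul_eq_div]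

/-- The kernel `e^{2xz - x² - z²/2}` shared by the Bargmann transform (evaluated at `z`) and its
inverse (evaluated at `conj z`), without the normalising constant. -/
noncomputable def bargmannKernel (x : ℝ) (z : ℂ) : ℂ :=
  cexp (2 * x * z - (x : ℂ) ^ 2 - z ^ 2 / 2)

/-- The normalising constant `(2/π)^{1/4}` of the Bargmann transform and of its inverse. -/
noncomputable def bargmannConst : ℂ := ((2 / Real.pi) ^ ((1 : ℝ) / 4) : ℝ)

lemma bargmann_eq (f : ℝ → ℂ) (z : ℂ) :
    Bargmann f z = bargmannConst * ∫ x : ℝ, f x * bargmannKernel x z := rfl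

lemma bargmannInv_eq (f : ℂ → ℂ) (x : ℝ) :
    BargmannInv f x = bargmannConst * gaussInt fun w => f w * bargmannKernel x (conj w) := rfl

lemma ofReal_sqrt_pi_ne_zero : (√Real.pi : ℂ) ≠ 0 :=
  ofReal_ne_zero.2 (Real.sqrt_pos.2 Real.pi_pos).ne'

lemma bargmannConst_sq : bargmannConst ^ 2 = √2 / √Real.pi := by
  rw [bargmannConst, ← ofReal_pow, ← ofReal_div, ← Real.sqrt_div zero_le_two,
    ← Real.rpow_mul_natCast (by positivity), Real.sqrt_eq_rpow]
  norm_num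

@[fun_prop]
lemma continuous_bargmannKernel : Continuous fun q : ℝ × ℂ => bargmannKernel q.1 q.2 := by
  unfold bargmannKernel
  fun_prop

lemma norm_bargmannKernel (x : ℝ) (z : ℂ) :
    ‖bargmannKernel x z‖ = Real.exp (‖z‖ ^ 2 / 2) * Real.exp (-(x - z.re) ^ 2) := by
  rw [bargmannKernel, norm_exp, ← Real.exp_add, Complex.sq_norm, normSq_apply]
  congr 1
  simp [pow_two]
  ring

lemma norm_bargmannKernel_le (x : ℝ) (z : ℂ) : ‖bargmannKernel x z‖ ≤ Real.exp (‖z‖ ^ 2 / 2) := by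
  rw [norm_bargmannKernel]
  exact mul_le_of_le_one_right (Real.exp_pos _).le
    (Real.exp_le_one_iff.2 (neg_nonpos.2 (sq_nonneg _)))

lemma integrable_exp_neg_sq_sub (a : ℝ) : Integrable fun x : ℝ => Real.exp (-(x - a) ^ 2) := by
  simpa using (integrable_exp_neg_mul_sq one_pos).comp_sub_right a

lemma integrable_bargmannKernel (z : ℂ) : Integrable fun x : ℝ => bargmannKernel x z := by
  refine ((integrable_exp_neg_sq_sub z.re).const_mul (Real.exp (‖z‖ ^ 2 / 2))).mono'
    (Continuous.aestronglyMeasurable (by fun_prop)) (.of_forall fun x => ?_)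
  rw [norm_bargmannKernel]

lemma fourierInv_bargmannKernel (z : ℂ) (t : ℝ) :
    FourierInv (fun x => bargmannKernel x z) t = bargmannKernel t (I * z) := by
  have hexp : ∀ x : ℝ, cexp (2 * I * t * x) * bargmannKernel x z =
      cexp (-1 * (x : ℂ) ^ 2 + 2 * (z + I * t) * x + -(z ^ 2 / 2)) := fun x => by
    rw [bargmannKernel, ← exp_add]
    ring_nf
  have hsqrt : ((Real.pi : ℂ) / -(-1)) ^ (1 / 2 : ℂ) = √Real.pi := by
    rw [neg_neg, div_one, Real.sqrt_eq_rpow, ofReal_cpow Real.pi_pos.le]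
    norm_num
  simp only [FourierInv, hexp]
  rw [integral_cexp_quadratic (by simp), hsqrt, ofReal_inv,
    inv_mul_cancel_left₀ ofReal_sqrt_pi_ne_zero, bargmannKernel]
  congr 1
  linear_combination (t ^ 2 + z ^ 2 / 2 : ℂ) * I_sq

lemma fourierT_bargmannKernel (z : ℂ) (t : ℝ) :
    FourierT (fun x => bargmannKernel x z) t = bargmannKernel t (-I * z) := by
  have hfourier : FourierT (fun x => bargmannKernel x z) t =
      FourierInv (fun x => bargmannKernel x z) (-t) := by
    simp only [FourierT, FourierInv, ofReal_neg, neg_mul, mul_neg]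
  rw [hfourier, fourierInv_bargmannKernel, bargmannKernel, bargmannKernel]
  congr 1
  push_cast
  ring

lemma integral_sign_mul_bargmannKernel_mul (z b : ℂ) :
    ∫ t : ℝ, -I * (Real.sign t : ℂ) * (bargmannKernel t (I * z) * bargmannKernel t (-I * b)) =
      √2 * (cexp (z * b) * Afun ((z - b) / √2)) := by
  have hsq : (√2 : ℂ) ^ 2 = 2 := by
    rw [← ofReal_pow, Real.sq_sqrt zero_le_two, ofReal_ofNat]
  have hne : (√2 : ℂ) ≠ 0 := by simp
  have hdiv : (z - b) / √2 * √2 = z - b := div_mul_cancel₀ _ hne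
  have hprod : ∀ t : ℝ, bargmannKernel t (I * z) * bargmannKernel t (-I * b) =
      cexp (z * b) * cexp (((z - b) / √2 + I * (√2 * t : ℝ)) ^ 2) := fun t => by
    rw [bargmannKernel, bargmannKernel, ← exp_add, ← exp_add]
    congr 1
    push_cast
    linear_combination (-2 * t * I - ((z - b) / √2 * √2 + (z - b)) / 2) * hdiv +
      (t ^ 2 + ((z - b) / √2) ^ 2 / 2) * hsq - (√2 ^ 2 * t ^ 2 + (z ^ 2 + b ^ 2) / 2) * I_sq
  have hsign := integral_sign_mul_cexp_sq_of_pos (Real.sqrt_pos.2 zero_lt_two) ((z - b) / √2)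
  calc ∫ t : ℝ, -I * (Real.sign t : ℂ) * (bargmannKernel t (I * z) * bargmannKernel t (-I * b))
      = ∫ t : ℝ, -I * cexp (z * b) *
          ((Real.sign t : ℂ) * cexp (((z - b) / √2 + I * (√2 * t : ℝ)) ^ 2)) := by
        simp only [hprod]
        congr with t
        ring
    _ = √2 * (cexp (z * b) * Afun ((z - b) / √2)) := by
        rw [integral_const_mul, hsign, ← mul_div_assoc, div_eq_iff hne]
        linear_combination (-2 * cexp (z * b) * Afun ((z - b) / √2)) * I_sq -
          cexp (z * b) * Afun ((z - b) / √2) * hsq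

lemma gaussInt_const_mul (c : ℂ) (F : ℂ → ℂ) :
    gaussInt (fun w => c * F w) = c * gaussInt F := by
  simp only [gaussInt, mul_assoc, integral_const_mul, mul_left_comm]

lemma measurePreserving_mul_left_of_norm_eq_one {c : ℂ} (hc : ‖c‖ = 1) :
    MeasurePreserving fun w : ℂ => c * w :=
  (rotation ⟨c, mem_sphere_zero_iff_norm.2 hc⟩).measurePreserving

lemma measurableEmbedding_mul_left_of_norm_eq_one {c : ℂ} (hc : ‖c‖ = 1) :
    MeasurableEmbedding fun w : ℂ => c * w :=
  (rotation ⟨c, mem_sphere_zero_iff_norm.2 hc⟩).toHomeomorph.measurableEmbedding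

lemma gaussInt_comp_mul_left {c : ℂ} (hc : ‖c‖ = 1) (F : ℂ → ℂ) :
    gaussInt (fun w => F (c * w)) = gaussInt F := by
  have hrot := (measurePreserving_mul_left_of_norm_eq_one hc).integral_comp
    (measurableEmbedding_mul_left_of_norm_eq_one hc) fun w => F w * cexp (-(‖w‖ : ℂ) ^ 2)
  simp only [norm_mul, hc, one_mul] at hrot
  rw [gaussInt, hrot, gaussInt]

lemma integrable_comp_mul_left_mul_exp {c : ℂ} (hc : ‖c‖ = 1) {f : ℂ → ℂ}
    (hf : Integrable fun w => f w * Real.exp (-‖w‖ ^ 2 / 2)) :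
    Integrable fun w => f (c * w) * Real.exp (-‖w‖ ^ 2 / 2) := by
  simpa [Function.comp_def, hc] using
    (measurePreserving_mul_left_of_norm_eq_one hc).integrable_comp_of_integrable hf

section Transforms

variable {f : ℂ → ℂ}

lemma integrable_prod_bargmannKernel
    (hf : Integrable fun w => f w * Real.exp (-‖w‖ ^ 2 / 2)) :
    Integrable fun q : ℝ × ℂ =>
      f q.2 * bargmannKernel q.1 (conj q.2) * cexp (-(‖q.2‖ : ℂ) ^ 2) := by
  have hsplit : ∀ x w, f w * bargmannKernel x (conj w) * cexp (-(‖w‖ : ℂ) ^ 2) =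
      f w * Real.exp (-‖w‖ ^ 2 / 2) *
        (bargmannKernel x (conj w) * Real.exp (-‖w‖ ^ 2 / 2)) := fun x w => by
    have hhalf : cexp (-(‖w‖ : ℂ) ^ 2) = Real.exp (-‖w‖ ^ 2 / 2) * Real.exp (-‖w‖ ^ 2 / 2) := by
      rw [← ofReal_mul, ← Real.exp_add, add_halves, ofReal_exp, ofReal_neg, ofReal_pow]
    rw [hhalf]
    ring
  have hnorm : ∀ x w, ‖bargmannKernel x (conj w) * Real.exp (-‖w‖ ^ 2 / 2)‖ =
      Real.exp (-(x - w.re) ^ 2) := fun x w => by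
    rw [norm_mul, norm_bargmannKernel, norm_conj, conj_re, norm_real,
      Real.norm_of_nonneg (Real.exp_pos _).le, mul_right_comm, ← Real.exp_add, neg_div,
      add_neg_cancel, Real.exp_zero, one_mul]
  simp only [hsplit]
  have hmeas : AEStronglyMeasurable (fun q : ℝ × ℂ => f q.2 * Real.exp (-‖q.2‖ ^ 2 / 2) *
      (bargmannKernel q.1 (conj q.2) * Real.exp (-‖q.2‖ ^ 2 / 2))) :=
    hf.aestronglyMeasurable.comp_snd.mul (Continuous.aestronglyMeasurable (by fun_prop))
  refine (integrable_prod_iff' hmeas).2 ⟨.of_forall fun w => ?_, ?_⟩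
  · exact ((integrable_bargmannKernel (conj w)).mul_const
      (Real.exp (-‖w‖ ^ 2 / 2) : ℂ)).const_mul (f w * Real.exp (-‖w‖ ^ 2 / 2))
  · have hgauss : ∀ w : ℂ, ∫ x : ℝ, Real.exp (-(x - w.re) ^ 2) = ∫ x : ℝ, Real.exp (-x ^ 2) :=
      fun w => integral_sub_right_eq_self (fun x : ℝ => Real.exp (-x ^ 2)) w.re
    simp only [norm_mul (f _ * _), hnorm, integral_const_mul, hgauss]
    exact hf.norm.mul_const _

lemma integrable_bargmannInv (hf : Integrable fun w => f w * Real.exp (-‖w‖ ^ 2 / 2)) :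
    Integrable (BargmannInv f) :=
  ((integrable_prod_bargmannKernel hf).integral_prod_left.const_mul _).const_mul _

lemma integral_fourierInv_mul {g h : ℝ → ℂ} (hg : Integrable g) (hh : Integrable h) :
    ∫ x : ℝ, FourierInv g x * h x = ∫ x : ℝ, g x * FourierInv h x := by
  let L : ℝ →ₗ[ℝ] ℝ →ₗ[ℝ] ℝ := (-2 : ℝ) • LinearMap.mul ℝ ℝ
  have hL : Continuous fun q : ℝ × ℝ => L q.1 q.2 := by
    simp only [L, LinearMap.smul_apply, LinearMap.mul_apply']
    fun_prop
  have hfourier : ∀ u : ℝ → ℂ, FourierInv u = fun x =>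
      ((√Real.pi)⁻¹ : ℝ) * VectorFourier.fourierIntegral Real.probChar volume L u x := fun u => by
    funext x
    rw [FourierInv, VectorFourier.fourierIntegral_probChar]
    have hexp : ∀ t : ℝ, 2 * I * x * t = -((L t x : ℝ) : ℂ) * I := fun t => by
      simp [L]
      ring
    simp only [hexp, smul_eq_mul]
  have hflip : L.flip = L := by
    ext
    simp [L]
  have hadj := VectorFourier.integral_fourierIntegral_smul_eq_flip Real.continuous_probChar hL hg hh
  simp only [smul_eq_mul, hflip] at hadj
  simp only [hfourier, mul_assoc, mul_left_comm (g _), integral_const_mul, hadj]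

lemma bargmann_fourierInv {h : ℝ → ℂ} (hh : Integrable h) (z : ℂ) :
    Bargmann (FourierInv h) z = Bargmann h (I * z) := by
  simp only [bargmann_eq, integral_fourierInv_mul hh (integrable_bargmannKernel z),
    fourierInv_bargmannKernel]

lemma integral_mul_bargmannInv {m : ℝ → ℂ} (hm : AEStronglyMeasurable m) {C : ℝ}
    (hC : ∀ᵐ t, ‖m t‖ ≤ C) (hf : Integrable fun w => f w * Real.exp (-‖w‖ ^ 2 / 2)) :
    ∫ t : ℝ, m t * BargmannInv f t = bargmannConst * gaussInt fun w =>
      f w * ∫ t : ℝ, m t * bargmannKernel t (conj w) := by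
  have hprod : Integrable fun q : ℝ × ℂ =>
      m q.1 * (f q.2 * bargmannKernel q.1 (conj q.2) * cexp (-(‖q.2‖ : ℂ) ^ 2)) :=
    (integrable_prod_bargmannKernel hf).bdd_mul hm.comp_fst
      (Measure.quasiMeasurePreserving_fst.ae hC)
  calc ∫ t : ℝ, m t * BargmannInv f t
      = bargmannConst * ((Real.pi : ℂ)⁻¹ * ∫ t : ℝ, ∫ w : ℂ,
          m t * (f w * bargmannKernel t (conj w) * cexp (-(‖w‖ : ℂ) ^ 2))) := by
        simp only [bargmannInv_eq, gaussInt, integral_const_mul, mul_left_comm (m _) bargmannConst,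
          mul_left_comm (m _) (_⁻¹)]
    _ = bargmannConst * ((Real.pi : ℂ)⁻¹ * ∫ w : ℂ, ∫ t : ℝ,
          m t * (f w * bargmannKernel t (conj w) * cexp (-(‖w‖ : ℂ) ^ 2))) := by
        rw [integral_integral_swap hprod]
    _ = bargmannConst * gaussInt fun w => f w * ∫ t : ℝ, m t * bargmannKernel t (conj w) := by
        simp only [gaussInt, ← mul_assoc, mul_comm (m _) (f _), integral_mul_const]
        simp only [mul_assoc, integral_const_mul]

lemma fourierT_bargmannInv (hf : Integrable fun w => f w * Real.exp (-‖w‖ ^ 2 / 2)) :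
    FourierT (BargmannInv f) = BargmannInv fun w => f (-I * w) := by
  funext t
  have hnorm : ∀ x : ℝ, ‖cexp (-2 * I * t * x)‖ ≤ 1 := fun x => by simp [norm_exp]
  have hkernel : ∀ w : ℂ, FourierT (fun x => bargmannKernel x (conj w)) t =
      bargmannKernel t (conj (I * w)) := fun w => by
    rw [fourierT_bargmannKernel, map_mul, conj_I]
  calc FourierT (BargmannInv f) t
      = bargmannConst * gaussInt fun w =>
          f w * FourierT (fun x => bargmannKernel x (conj w)) t := by
        rw [FourierT, integral_mul_bargmannInv (Continuous.aestronglyMeasurable (by fun_prop))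
          (.of_forall hnorm) hf, mul_left_comm, ← gaussInt_const_mul]
        simp only [FourierT, mul_left_comm]
    _ = bargmannConst * gaussInt fun w => f (-I * (I * w)) * bargmannKernel t (conj (I * w)) := by
        simp only [hkernel, ← mul_assoc, neg_mul, I_mul_I, neg_neg, one_mul]
    _ = BargmannInv (fun w => f (-I * w)) t := by
        rw [bargmannInv_eq,
          gaussInt_comp_mul_left norm_I fun w => f (-I * w) * bargmannKernel t (conj w)]

lemma bargmann_mul_bargmannInv {m : ℝ → ℂ} (hm : AEStronglyMeasurable m) {C : ℝ}
    (hC : ∀ᵐ t, ‖m t‖ ≤ C) (hf : Integrable fun w => f w * Real.exp (-‖w‖ ^ 2 / 2)) (z : ℂ) :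
    Bargmann (fun t => m t * BargmannInv f t) z = bargmannConst ^ 2 * gaussInt fun w =>
      f w * ∫ t : ℝ, m t * (bargmannKernel t z * bargmannKernel t (conj w)) := by
  have hmk : AEStronglyMeasurable fun t : ℝ => m t * bargmannKernel t z :=
    hm.mul (Continuous.aestronglyMeasurable (by fun_prop))
  have hbound : ∀ᵐ t : ℝ, ‖m t * bargmannKernel t z‖ ≤ C * Real.exp (‖z‖ ^ 2 / 2) := by
    filter_upwards [hC] with t ht
    rw [norm_mul]
    exact mul_le_mul ht (norm_bargmannKernel_le t z) (norm_nonneg _) ((norm_nonneg _).trans ht)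
  rw [bargmann_eq]
  simp only [mul_right_comm (m _) (BargmannInv f _)]
  rw [integral_mul_bargmannInv hmk hbound hf]
  simp only [mul_assoc, pow_two]

lemma bargmann_fourierMultiplier {m : ℝ → ℂ} (hm : AEStronglyMeasurable m) {C : ℝ}
    (hC : ∀ᵐ t, ‖m t‖ ≤ C) (hf : Integrable fun w => f w * Real.exp (-‖w‖ ^ 2 / 2)) (z : ℂ) :
    Bargmann (FourierInv fun t => m t * FourierT (BargmannInv f) t) z =
      bargmannConst ^ 2 * gaussInt fun w =>
        f w * ∫ t : ℝ, m t * (bargmannKernel t (I * z) * bargmannKernel t (-I * conj w)) := by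
  have hfI : Integrable fun w => f (-I * w) * Real.exp (-‖w‖ ^ 2 / 2) :=
    integrable_comp_mul_left_mul_exp (by simp) hf
  have hrot := gaussInt_comp_mul_left (c := -I) (by simp) fun w =>
    f w * ∫ t : ℝ, m t * (bargmannKernel t (I * z) * bargmannKernel t (-I * conj w))
  have hconj : ∀ w : ℂ, -I * conj (-I * w) = conj w := fun w => by
    rw [map_mul, map_neg, conj_I, neg_neg, ← mul_assoc, neg_mul, I_mul_I, neg_neg, one_mul]
  simp only [hconj] at hrot
  rw [fourierT_bargmannInv hf, bargmann_fourierInv ((integrable_bargmannInv hfI).bdd_mul hm hC),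
    bargmann_mul_bargmannInv hm hC hfI, hrot]

end Transforms

lemma integrable_norm_pow_mul_exp_neg_mul_sq {E : Type*} [NormedAddCommGroup E] [NormedSpace ℝ E]
    [FiniteDimensional ℝ E] [Nontrivial E] [MeasurableSpace E] [BorelSpace E] (μ : Measure E)
    [μ.IsAddHaarMeasure] {b : ℝ} (hb : 0 < b) (n : ℕ) :
    Integrable (fun x : E => ‖x‖ ^ n * Real.exp (-b * ‖x‖ ^ 2)) μ := by
  let d := Module.finrank ℝ E - 1
  have hradial := integrableOn_rpow_mul_exp_neg_mul_sq hb (s := (d + n : ℕ))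
    (neg_one_lt_zero.trans_le (Nat.cast_nonneg _))
  refine (integrable_fun_norm_addHaar μ (f := fun r => r ^ n * Real.exp (-b * r ^ 2))).2 ?_
  simpa only [Real.rpow_natCast, pow_add, mul_assoc, smul_eq_mul] using hradial

lemma integrable_eval_mul_exp_neg_mul_sq {b : ℝ} (hb : 0 < b) (p : Polynomial ℂ) :
    Integrable fun w : ℂ => p.eval w * Real.exp (-b * ‖w‖ ^ 2) := by
  induction p using Polynomial.induction_on' with
  | add p q hp hq =>
    simp only [Polynomial.eval_add, add_mul]
    exact hp.add hq
  | monomial n a =>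
    refine ((integrable_norm_pow_mul_exp_neg_mul_sq volume hb n).const_mul ‖a‖).mono'
      (Continuous.aestronglyMeasurable (by fun_prop)) (.of_forall fun w => ?_)
    rw [Polynomial.eval_monomial, norm_mul, norm_mul, norm_pow, norm_real,
      Real.norm_of_nonneg (Real.exp_pos _).le, mul_assoc]

lemma measurable_ofReal_sign : Measurable fun t : ℝ => (Real.sign t : ℂ) := by
  unfold Real.sign
  exact measurable_ofReal.comp (measurable_const.ite measurableSet_Iio
    (measurable_const.ite measurableSet_Ioi measurable_const))

lemma norm_ofReal_sign_le_one (t : ℝ) : ‖(Real.sign t : ℂ)‖ ≤ 1 := by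
  rcases Real.sign_apply_eq t with h | h | h <;> simp [h]

theorem bargmann_hilbert_general {f : ℂ → ℂ}
    (hf : Integrable fun w => f w * Real.exp (-‖w‖ ^ 2 / 2)) (z : ℂ) :
    Bargmann (hilbertT (BargmannInv f)) z =
      2 / (√Real.pi : ℂ) * gaussInt fun w =>
        f w * cexp (z * conj w) * Afun ((z - conj w) / (√2 : ℂ)) := by
  have hconst : bargmannConst ^ 2 * √2 = 2 / √Real.pi := by
    rw [bargmannConst_sq, div_mul_eq_mul_div, ← ofReal_mul, Real.mul_self_sqrt zero_le_two,
      ofReal_ofNat]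
  rw [hilbertT,
    bargmann_fourierMultiplier (measurable_ofReal_sign.const_mul (-I)).aestronglyMeasurable
      (.of_forall fun t => by simpa using norm_ofReal_sign_le_one t) hf, ← hconst]
  simp only [integral_sign_mul_bargmannKernel_mul]
  simp only [mul_left_comm (f _) (√2 : ℂ), gaussInt_const_mul, mul_assoc]

/-- Under the Bargmann transform, the Hilbert transform becomes the integral operator
f ↦ (2/√π) ∫ f(w) e^{zw̄} A((z - w̄)/√2) dλ(w). -/
theorem bargmann_hilbert (p : Polynomial ℂ) (f : ℂ → ℂ) (hf : ∀ z, f z = p.eval z) (z : ℂ) :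
    Bargmann (hilbertT (BargmannInv f)) z =
      2 / (Real.sqrt Real.pi : ℂ) * gaussInt (fun w =>
        f w * Complex.exp (z * starRingEnd ℂ w) *
          Afun ((z - starRingEnd ℂ w) / (Real.sqrt 2 : ℂ))) := by
  obtain rfl : f = fun w => p.eval w := funext hf
  exact bargmann_hilbert_general
    (by simpa [neg_div, div_eq_inv_mul] using integrable_eval_mul_exp_neg_mul_sq one_half_pos p) z
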